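/- For the 3×3×3 tensor with Ω = {(1,1,1),(1,3,1),(2,1,1),(3,2,1),(3,1,2),(2,2,3),(3,3,3)} and observations Q_{111} = −1, Q_{131} = 1, Q_{211} = 1, Q_{321} = 1, Q_{312} = 1, Q_{223} = 1, Q_{333} = 1, there exists no real rank-one completion a_i b_j c_k = Q_{ijk}, but there exists a complex one, e.g. a = (1, −1, 𝔦), b = (1, 𝔦, −1), c = (−1, −𝔦, 𝔦). -/

import Mathlib

open Complex

/-!
Multiply the six observed entries of a rank-one completion other than the one at `(3,1,2)`. In this
product each `a_i` and each `b_j` occurs twice, `c_1` four times and `c_3` twice, so the product is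
a square. The observed values multiply to `-1`, so the scalars must contain a square root of `-1`;
conversely, such a root `i` can take the place of `𝔦` in the complex completion.
-/

theorem isSquare_mul_rankOne_entries {M : Type*} [CommSemigroup M]
    (a b c : Fin 3 → M) :
    IsSquare ((a 0 * b 0 * c 0) * (a 0 * b 2 * c 0) * (a 1 * b 0 * c 0) *
      (a 2 * b 1 * c 0) * (a 1 * b 1 * c 2) * (a 2 * b 2 * c 2)) :=
  ⟨a 0 * a 1 * a 2 * (b 0 * b 1 * b 2) * (c 0 * c 0 * c 2), by ac_rfl⟩

section

variable {M : Type*} [CommMonoid M] [HasDistribNeg M]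

/-- The vectors `a`, `b`, `c` form a rank-one completion of the partial tensor of Table 4, with
indices shifted to start at `0`. The scalars form a commutative monoid with a distributive negation,
such as the multiplicative monoid of a commutative ring. -/
def IsTable4Completion (a b c : Fin 3 → M) : Prop :=
  a 0 * b 0 * c 0 = -1 ∧
  a 0 * b 2 * c 0 = 1 ∧
  a 1 * b 0 * c 0 = 1 ∧
  a 2 * b 1 * c 0 = 1 ∧
  a 2 * b 0 * c 1 = 1 ∧
  a 1 * b 1 * c 2 = 1 ∧
  a 2 * b 2 * c 2 = 1

theorem IsTable4Completion.isSquare_neg_one {a b c : Fin 3 → M} (h : IsTable4Completion a b c) :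
    IsSquare (-1 : M) := by
  obtain ⟨h₀₀₀, h₀₂₀, h₁₀₀, h₂₁₀, -, h₁₁₂, h₂₂₂⟩ := h
  simpa only [h₀₀₀, h₀₂₀, h₁₀₀, h₂₁₀, h₁₁₂, h₂₂₂, mul_one] using
    isSquare_mul_rankOne_entries a b c

theorem isTable4Completion_of_mul_self_eq_neg_one {i : M} (hi : i * i = -1) :
    IsTable4Completion ![1, -1, i] ![1, i, -1] ![-1, -i, i] := by
  simp [IsTable4Completion, hi]

theorem table4_no_real_but_complex_general :
    ((∃ a b c : Fin 3 → M, IsTable4Completion a b c) → IsSquare (-1 : M)) ∧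
      ∀ i : M, i * i = -1 → IsTable4Completion ![1, -1, i] ![1, i, -1] ![-1, -i, i] :=
  ⟨fun ⟨_, _, _, h⟩ ↦ h.isSquare_neg_one, fun _ ↦ isTable4Completion_of_mul_self_eq_neg_one⟩

end

/-- Table 4: no real rank-one completion exists, but a complex one does. -/
theorem table4_no_real_but_complex
    : (¬ ∃ a b c : Fin 3 → ℝ,
        a 0 * b 0 * c 0 = -1 ∧
        a 0 * b 2 * c 0 = 1 ∧
        a 1 * b 0 * c 0 = 1 ∧
        a 2 * b 1 * c 0 = 1 ∧
        a 2 * b 0 * c 1 = 1 ∧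
        a 1 * b 1 * c 2 = 1 ∧
        a 2 * b 2 * c 2 = 1) ∧
      (let a : Fin 3 → ℂ := ![1, -1, Complex.I];
        let b : Fin 3 → ℂ := ![1, Complex.I, -1];
        let c : Fin 3 → ℂ := ![-1, -Complex.I, Complex.I];
        a 0 * b 0 * c 0 = -1 ∧
        a 0 * b 2 * c 0 = 1 ∧
        a 1 * b 0 * c 0 = 1 ∧
        a 2 * b 1 * c 0 = 1 ∧
        a 2 * b 0 * c 1 = 1 ∧
        a 1 * b 1 * c 2 = 1 ∧
        a 2 * b 2 * c 2 = 1) :=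
  ⟨fun h ↦ (table4_no_real_but_complex_general.1 h).nonneg.not_gt neg_one_lt_zero,
    table4_no_real_but_complex_general.2 I I_mul_I⟩
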